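/- Assume χ_p ≠ 0 and, in case p = 0, χ_0 ∈ {1} ∪ (ℂ \ ℤ). Then F̃_χ is irreducible: the only ℂ-subspaces of F̃ invariant under all the operators G⁺(i−1/2) and G⁻(i−1/2), i ∈ ℤ, are {0} and F̃. -/

import Mathlib

noncomputable section

/-- The fermionic Fock space `F`: it has basis indexed by pairs `(A, B)` of finite sets of
nonnegative integers, the pair `(A, B)` corresponding to the basis monomial
`Ψ⁺(−n₁−1/2)⋯Ψ⁺(−n_r−1/2)·Ψ⁻(−k₁−1/2)⋯Ψ⁻(−k_s−1/2)·𝟙` where `A = {n₁ > ⋯ > n_r}` and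
`B = {k₁ > ⋯ > k_s}`. -/
abbrev FockF : Type := (Finset ℕ × Finset ℕ) →₀ ℂ

/-- The vacuum vector `𝟙`. -/
def vac : FockF := Finsupp.single (∅, ∅) 1

/-- `(−1)^{#{a ∈ S : a > m}}`. -/
def sgn (S : Finset ℕ) (m : ℕ) : ℂ := (-1 : ℂ) ^ (S.filter fun a => m < a).card

/-- `Ψ⁺(−m−1/2)`: exterior multiplication (creation). -/
def psiPneg (m : ℕ) : Module.End ℂ FockF :=
  Finsupp.lsum ℂ fun AB : Finset ℕ × Finset ℕ => LinearMap.toSpanSingleton ℂ FockF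
    (if m ∈ AB.1 then 0 else sgn AB.1 m • Finsupp.single (insert m AB.1, AB.2) 1)

/-- `Ψ⁺(m+1/2)`: the odd contraction operator pairing with `Ψ⁻(−m−1/2)` (annihilation). -/
def psiPpos (m : ℕ) : Module.End ℂ FockF :=
  Finsupp.lsum ℂ fun AB : Finset ℕ × Finset ℕ => LinearMap.toSpanSingleton ℂ FockF
    (if m ∈ AB.2 then ((-1 : ℂ) ^ AB.1.card * sgn AB.2 m) • Finsupp.single (AB.1, AB.2.erase m) 1
     else 0)

/-- `Ψ⁻(−m−1/2)`: exterior multiplication (creation). -/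
def psiMneg (m : ℕ) : Module.End ℂ FockF :=
  Finsupp.lsum ℂ fun AB : Finset ℕ × Finset ℕ => LinearMap.toSpanSingleton ℂ FockF
    (if m ∈ AB.2 then 0
     else ((-1 : ℂ) ^ AB.1.card * sgn AB.2 m) • Finsupp.single (AB.1, insert m AB.2) 1)

/-- `Ψ⁻(m+1/2)`: the odd contraction operator pairing with `Ψ⁺(−m−1/2)` (annihilation). -/
def psiMpos (m : ℕ) : Module.End ℂ FockF :=
  Finsupp.lsum ℂ fun AB : Finset ℕ × Finset ℕ => LinearMap.toSpanSingleton ℂ FockF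
    (if m ∈ AB.1 then sgn AB.1 m • Finsupp.single (AB.1.erase m, AB.2) 1 else 0)

/-- `PsiP i` is the operator `Ψ⁺(i − 1/2)`, `i ∈ ℤ`. -/
def PsiP (i : ℤ) : Module.End ℂ FockF :=
  if i ≤ 0 then psiPneg (-i).toNat else psiPpos (i - 1).toNat

/-- `PsiM i` is the operator `Ψ⁻(i − 1/2)`, `i ∈ ℤ`. -/
def PsiM (i : ℤ) : Module.End ℂ FockF :=
  if i ≤ 0 then psiMneg (-i).toNat else psiMpos (i - 1).toNat

/-- `G⁺(i−1/2) = (λ − i)·Ψ⁺(i−1/2)`. -/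
def Gplus (lam : ℂ) (i : ℤ) : Module.End ℂ FockF := (lam - (i : ℂ)) • PsiP i

/-- The finite set of indices `k ≥ −p` for which `Ψ⁻(k+i−1/2)` can act nontrivially on the
basis monomial `AB`; outside of it all terms of the locally finite sum defining `G⁻` vanish. -/
def GminusIdx (p : ℕ) (i : ℤ) (AB : Finset ℕ × Finset ℕ) : Finset ℤ :=
  (Finset.Icc (-(p : ℤ)) (-i) ∪ AB.1.image fun a : ℕ => (a : ℤ) + 1 - i).filter
    fun k => -(p : ℤ) ≤ k

/-- `G⁻(i−1/2) = −i·Ψ⁻(i−1/2) + Σ_{k=−p}^∞ χ_{−k}·Ψ⁻(k+i−1/2)` (a locally finite sum). -/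
def Gminus (p : ℕ) (χ : ℤ → ℂ) (i : ℤ) : Module.End ℂ FockF :=
  (-(i : ℂ)) • PsiM i +
    Finsupp.lsum ℂ fun AB : Finset ℕ × Finset ℕ => LinearMap.toSpanSingleton ℂ FockF
      (∑ k ∈ GminusIdx p i AB, χ (-k) • PsiM (k + i) (Finsupp.single AB 1))

end

/-- Coefficients of `psiMpos m v`. -/
lemma psiMpos_apply (m : ℕ) (v : FockF) (A B : Finset ℕ) :
    psiMpos m v (A, B) = if m ∈ A then 0 else sgn (insert m A) m * v (insert m A, B) := by
  induction v using Finsupp.induction_linear with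
  | zero => simp
  | add f g hf hg =>
    rw [map_add, Finsupp.add_apply, hf, hg, Finsupp.add_apply]
    split_ifs <;> ring
  | single x c =>
    obtain ⟨C, D⟩ := x
    by_cases hmC : m ∈ C
    · by_cases hmA : m ∈ A
      · have h : C.erase m ≠ A := by
          rintro rfl
          simp at hmA
        simp [psiMpos, hmC, hmA, Finsupp.single_apply, h]
      · by_cases hCA : C.erase m = A
        · have hC : C = insert m A := by rw [← hCA, Finset.insert_erase hmC]
          subst hC
          by_cases hD : D = B <;>
            simp [psiMpos, hmA, Finsupp.single_apply, hD, mul_comm]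
        · have hC : C ≠ insert m A := by
            rintro rfl
            simp [hmA] at hCA
          simp [psiMpos, hmC, hmA, Finsupp.single_apply, hCA, hC]
    · have hC : C ≠ insert m A := by
        rintro rfl
        simp at hmC
      simp [psiMpos, hmC, Finsupp.single_apply, hC]

/-- Coefficients of `psiPpos m v`. -/
lemma psiPpos_apply (m : ℕ) (v : FockF) (A B : Finset ℕ) :
    psiPpos m v (A, B) = if m ∈ B then 0 else
      ((-1 : ℂ) ^ A.card * sgn (insert m B) m) * v (A, insert m B) := by
  induction v using Finsupp.induction_linear with
  | zero => simp
  | add f g hf hg =>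
    rw [map_add, Finsupp.add_apply, hf, hg, Finsupp.add_apply]
    split_ifs <;> ring
  | single x c =>
    obtain ⟨C, D⟩ := x
    by_cases hmC : m ∈ D
    · by_cases hmA : m ∈ B
      · have h : D.erase m ≠ B := by
          rintro rfl
          simp at hmA
        simp [psiPpos, hmC, hmA, Finsupp.single_apply, h]
      · by_cases hCA : D.erase m = B
        · have hC : D = insert m B := by rw [← hCA, Finset.insert_erase hmC]
          subst hC
          by_cases hD : C = A
          · subst hD
            simp [psiPpos, hmA, Finsupp.single_apply]
            ring
          · simp [psiPpos, hmA, Finsupp.single_apply, hD]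
        · have hC : D ≠ insert m B := by
            rintro rfl
            simp [hmA] at hCA
          simp [psiPpos, hmC, hmA, Finsupp.single_apply, hCA, hC]
    · have hC : D ≠ insert m B := by
        rintro rfl
        simp at hmC
      simp [psiPpos, hmC, Finsupp.single_apply, hC]

lemma sgn_ne_zero (S : Finset ℕ) (m : ℕ) : sgn S m ≠ 0 := by
  simp [sgn]

lemma PsiM_succ (m : ℕ) : PsiM ((m : ℤ) + 1) = psiMpos m := by
  have : ¬ ((m : ℤ) + 1 ≤ 0) := by omega
  simp [PsiM, this]

lemma PsiP_succ (m : ℕ) : PsiP ((m : ℤ) + 1) = psiPpos m := by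
  have : ¬ ((m : ℤ) + 1 ≤ 0) := by omega
  simp [PsiP, this]

lemma PsiM_neg (m : ℕ) : PsiM (-(m : ℤ)) = psiMneg m := by
  simp [PsiM]

lemma PsiP_neg (m : ℕ) : PsiP (-(m : ℤ)) = psiPneg m := by
  simp [PsiP]

lemma PsiM_single_eq_zero (j : ℤ) (hj : 0 < j) (x : Finset ℕ × Finset ℕ)
    (h : ∀ a ∈ x.1, (a : ℤ) + 1 ≠ j) (c : ℂ) : PsiM j (Finsupp.single x c) = 0 := by
  obtain ⟨m, rfl⟩ : ∃ m : ℕ, j = m + 1 := ⟨(j - 1).toNat, by omega⟩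
  rw [PsiM_succ]
  have : m ∉ x.1 := fun hm => h m hm rfl
  simp [psiMpos, this]

/-- Local finiteness. -/
lemma PsiM_eventually_zero (v : FockF) : ∃ J : ℤ, ∀ j > J, PsiM j v = 0 := by
  induction v using Finsupp.induction_linear with
  | zero => exact ⟨0, by simp⟩
  | add f g hf hg =>
    obtain ⟨J, hJ⟩ := hf
    obtain ⟨K, hK⟩ := hg
    refine ⟨max J K, fun j hj => ?_⟩
    rw [map_add, hJ j (by omega), hK j (by omega), add_zero]
  | single x c =>
    refine ⟨(x.1.sup id : ℕ) + 1, fun j hj => PsiM_single_eq_zero j (by omega) x ?_ c⟩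
    intro a ha h
    have : a ≤ x.1.sup id := Finset.le_sup (f := id) ha
    omega

/-- `Gminus` as an honest finite sum on each vector. -/
lemma Gminus_eq (p : ℕ) (χ : ℤ → ℂ) (i : ℤ) (v : FockF) : ∃ N₀ : ℤ, ∀ N ≥ N₀,
    Gminus p χ i v = (-(i : ℂ)) • PsiM i v +
      ∑ k ∈ Finset.Icc (-(p : ℤ)) N, χ (-k) • PsiM (k + i) v := by
  induction v using Finsupp.induction_linear with
  | zero => exact ⟨0, by simp⟩
  | add f g hf hg =>
    obtain ⟨J, hJ⟩ := hf
    obtain ⟨K, hK⟩ := hg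
    refine ⟨max J K, fun j hj => ?_⟩
    rw [map_add, hJ j (by omega), hK j (by omega)]
    simp only [map_add, smul_add, Finset.sum_add_distrib]
    abel
  | single x c =>
    refine ⟨(x.1.sup id : ℕ) + 1 + |i|, fun N hN => ?_⟩
    have hi1 := neg_abs_le i
    have hi2 := le_abs_self i
    have key : ∑ k ∈ GminusIdx p i x, χ (-k) • PsiM (k + i) (Finsupp.single x 1) =
        ∑ k ∈ Finset.Icc (-(p : ℤ)) N, χ (-k) • PsiM (k + i) (Finsupp.single x 1) := by
      apply Finset.sum_subset
      · intro k hk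
        simp only [GminusIdx, Finset.mem_filter, Finset.mem_union, Finset.mem_Icc,
          Finset.mem_image] at hk
        rw [Finset.mem_Icc]
        refine ⟨hk.2, ?_⟩
        rcases hk.1 with h | ⟨a, ha, h⟩
        · omega
        · have : a ≤ x.1.sup id := Finset.le_sup (f := id) ha
          omega
      · intro k hk hk'
        rw [Finset.mem_Icc] at hk
        simp only [GminusIdx, Finset.mem_filter, Finset.mem_union, Finset.mem_Icc,
          Finset.mem_image, not_and] at hk'
        rw [PsiM_single_eq_zero, smul_zero]
        · by_contra hc
          exact hk' (Or.inl ⟨hk.1, by omega⟩) hk.1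
        · intro a ha h
          exact hk' (Or.inr ⟨a, ha, by omega⟩) hk.1
    have hs : (Finsupp.single x c : FockF) = c • Finsupp.single x 1 := by simp
    rw [hs]
    simp only [map_smul]
    simp only [Gminus, LinearMap.add_apply, LinearMap.smul_apply, Finsupp.lsum_single,
      LinearMap.toSpanSingleton_apply, one_smul, key, smul_add, Finset.smul_sum]
    congr 1
    · rw [smul_comm]
    · exact Finset.sum_congr rfl fun k _ => smul_comm _ _ _

/-- Assume `χ_p ≠ 0` and, in case `p = 0`, `χ_0 ∈ {1} ∪ (ℂ \ ℤ)`.  Then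
`F̃_χ` is irreducible: the only `ℂ`-subspaces of `F̃ = Ker_F Ψ⁻(1/2)` invariant under all the
operators `G⁺(i−1/2) = −i·Ψ⁺(i−1/2)` and `G⁻(i−1/2)`, `i ∈ ℤ`, are `{0}` and `F̃`. -/
theorem statement5 (p : ℕ) (χ : ℤ → ℂ) (hχtop : ∀ j : ℤ, (p : ℤ) < j → χ j = 0)
    (hp : χ p ≠ 0) (h0 : p = 0 → (χ 0 = 1 ∨ ∀ n : ℤ, χ 0 ≠ (n : ℂ)))
    (U : Submodule ℂ FockF) (hsub : U ≤ LinearMap.ker (PsiM 1))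
    (hU : ∀ i : ℤ, ∀ v ∈ U, ((-(i : ℂ)) • PsiP i) v ∈ U ∧ Gminus p χ i v ∈ U) :
    U = ⊥ ∨ U = LinearMap.ker (PsiM 1) := by
  have hP : ∀ i : ℤ, i ≠ 0 → ∀ v ∈ U, PsiP i v ∈ U := by
    intro i hi v hv
    have h := (hU i v hv).1
    rw [LinearMap.smul_apply] at h
    refine (U.smul_mem_iff ?_).1 h
    simpa using hi
  have hM : ∀ j : ℤ, ∀ v ∈ U, PsiM j v ∈ U := by
    intro j v hv
    obtain ⟨J, hJ⟩ := PsiM_eventually_zero v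
    have main : ∀ n : ℕ, ∀ j : ℤ, J - n < j → PsiM j v ∈ U := by
      intro n
      induction n with
      | zero =>
        intro j hj
        rw [hJ j (by simpa using hj)]
        exact U.zero_mem
      | succ n ih =>
        intro j hj
        by_cases hj' : J - n < j
        · exact ih j hj'
        have hlater : ∀ j' > j, PsiM j' v ∈ U := fun j' h => ih j' (by push_cast at hj; omega)
        by_cases hj1 : j = 1
        · have h1 : PsiM 1 v = 0 := hsub hv
          rw [hj1, h1]
          exact U.zero_mem
        obtain ⟨N₀, hN⟩ := Gminus_eq p χ (j + p) v
        have hN := hN (max N₀ (-(p : ℤ))) (le_max_left _ _)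
        have hG := (hU (j + p) v hv).2
        rw [← Finset.sum_erase_add _ _
          (Finset.mem_Icc.2 ⟨le_refl (-(p : ℤ)), le_max_right N₀ (-(p : ℤ))⟩)] at hN
        have hS : ∑ k ∈ (Finset.Icc (-(p : ℤ)) (max N₀ (-(p : ℤ)))).erase (-(p : ℤ)),
            χ (-k) • PsiM (k + (j + p)) v ∈ U := by
          refine U.sum_mem fun k hk => U.smul_mem _ (hlater _ ?_)
          rw [Finset.mem_erase, Finset.mem_Icc] at hk
          omega
        set S := ∑ k ∈ (Finset.Icc (-(p : ℤ)) (max N₀ (-(p : ℤ)))).erase (-(p : ℤ)),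
            χ (-k) • PsiM (k + (j + p)) v
        have hidx : -(p : ℤ) + (j + p) = j := by ring
        rw [hidx, neg_neg] at hN
        rcases Nat.eq_zero_or_pos p with hp0 | hp0
        · subst hp0
          have hc : (χ 0 - (j : ℂ)) • PsiM j v ∈ U := by
            have : (χ 0 - (j : ℂ)) • PsiM j v = Gminus 0 χ (j + (0 : ℕ)) v - S := by
              rw [hN]
              simp only [Nat.cast_zero, add_zero, sub_smul, neg_smul]
              abel
            rw [this]
            exact U.sub_mem hG hS
          refine (U.smul_mem_iff ?_).1 hc
          rw [sub_ne_zero]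
          rcases h0 rfl with h | h
          · rw [h]
            intro h'
            exact hj1 (by exact_mod_cast h'.symm)
          · exact h j
        · have hc : χ p • PsiM j v ∈ U := by
            have : χ p • PsiM j v = Gminus p χ (j + p) v - S -
                (-((j + p : ℤ) : ℂ)) • PsiM (j + p) v := by
              rw [hN]
              abel
            rw [this]
            exact U.sub_mem (U.sub_mem hG hS) (U.smul_mem _ (hlater _ (by omega)))
          exact (U.smul_mem_iff hp).1 hc
    exact main (J - j + 1).toNat j (by omega)
  have hker : ∀ v ∈ LinearMap.ker (PsiM 1), ∀ x ∈ v.support, 0 ∉ x.1 := by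
    intro v hv x hx h0x
    have h1 : psiMpos 0 v = 0 := by
      rw [← PsiM_succ]
      simpa using hv
    have h2 := psiMpos_apply 0 v (x.1.erase 0) x.2
    rw [h1, Finset.insert_erase h0x] at h2
    simp only [Finsupp.coe_zero, Pi.zero_apply, Finset.notMem_erase, if_false] at h2
    exact mul_ne_zero (sgn_ne_zero _ _) (Finsupp.mem_support_iff.1 hx) h2.symm
  rcases eq_or_ne U ⊥ with hbot | hbot
  · exact Or.inl hbot
  right
  apply le_antisymm hsub
  -- the vacuum lies in `U`
  have hvac : ∀ n : ℕ, ∀ v ∈ U, v ≠ 0 → (∀ x ∈ v.support, x.1.card + x.2.card ≤ n) →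
      (Finsupp.single (∅, ∅) 1 : FockF) ∈ U := by
    intro n
    induction n with
    | zero =>
      intro v hv hv0 hb
      obtain ⟨x, hx⟩ := Finsupp.support_nonempty_iff.2 hv0
      have hx0 : ∀ y ∈ v.support, y = (∅, ∅) := by
        intro y hy
        have := hb y hy
        refine Prod.ext ?_ ?_
        · exact Finset.card_eq_zero.1 (by omega)
        · exact Finset.card_eq_zero.1 (by omega)
      have hv' : v = v (∅, ∅) • Finsupp.single (∅, ∅) 1 := by
        ext y
        by_cases hy : y = (∅, ∅)
        · subst hy
          simp
        · have : v y = 0 := by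
            by_contra h
            exact hy (hx0 y (Finsupp.mem_support_iff.2 h))
          rw [this]
          simp [Finsupp.single_apply, Ne.symm hy]
      rw [hx0 x hx, Finsupp.mem_support_iff] at hx
      rw [hv'] at hv
      exact (U.smul_mem_iff hx).1 hv
    | succ n ih =>
      intro v hv hv0 hb
      by_cases hA : ∃ x ∈ v.support, ∃ m, m ∈ x.1
      · obtain ⟨x, hx, m, hm⟩ := hA
        have hw : psiMpos m v ∈ U := by
          rw [← PsiM_succ]
          exact hM _ _ hv
        refine ih _ hw ?_ ?_
        · intro h
          have h2 := psiMpos_apply m v (x.1.erase m) x.2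
          rw [h, Finset.insert_erase hm] at h2
          simp only [Finsupp.coe_zero, Pi.zero_apply, Finset.notMem_erase, if_false] at h2
          exact mul_ne_zero (sgn_ne_zero _ _) (Finsupp.mem_support_iff.1 hx) h2.symm
        · rintro ⟨A, B⟩ hy
          rw [Finsupp.mem_support_iff, psiMpos_apply] at hy
          split_ifs at hy with hmA
          · exact absurd rfl hy
          · have := hb (insert m A, B) (Finsupp.mem_support_iff.2 (right_ne_zero_of_mul hy))
            simp only [Finset.card_insert_of_notMem hmA] at this
            simp only
            omega
      by_cases hB : ∃ x ∈ v.support, ∃ m, m ∈ x.2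
      · obtain ⟨x, hx, m, hm⟩ := hB
        have hw : psiPpos m v ∈ U := by
          rw [← PsiP_succ]
          exact hP _ (by omega) _ hv
        refine ih _ hw ?_ ?_
        · intro h
          have h2 := psiPpos_apply m v x.1 (x.2.erase m)
          rw [h, Finset.insert_erase hm] at h2
          simp only [Finsupp.coe_zero, Pi.zero_apply, Finset.notMem_erase, if_false] at h2
          exact mul_ne_zero (mul_ne_zero (by simp) (sgn_ne_zero _ _))
            (Finsupp.mem_support_iff.1 hx) h2.symm
        · rintro ⟨A, B⟩ hy
          rw [Finsupp.mem_support_iff, psiPpos_apply] at hy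
          split_ifs at hy with hmB
          · exact absurd rfl hy
          · have := hb (A, insert m B) (Finsupp.mem_support_iff.2 (right_ne_zero_of_mul hy))
            simp only [Finset.card_insert_of_notMem hmB] at this
            simp only
            omega
      · refine ih v hv hv0 fun x hx => ?_
        have h1 : x.1 = ∅ := Finset.eq_empty_of_forall_notMem fun m hm => hA ⟨x, hx, m, hm⟩
        have h2 : x.2 = ∅ := Finset.eq_empty_of_forall_notMem fun m hm => hB ⟨x, hx, m, hm⟩
        simp [h1, h2]
  have hvacU : (Finsupp.single (∅, ∅) 1 : FockF) ∈ U := by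
    obtain ⟨v, hv, hv0⟩ := U.ne_bot_iff.1 hbot
    exact hvac (v.support.sup fun x => x.1.card + x.2.card) v hv hv0
      fun x hx => Finset.le_sup (f := fun x : Finset ℕ × Finset ℕ => x.1.card + x.2.card) hx
  have hBU : ∀ B : Finset ℕ, (Finsupp.single (∅, B) 1 : FockF) ∈ U := by
    intro B
    induction B using Finset.induction_on with
    | empty => exact hvacU
    | insert m B hm ih =>
      have h := hM (-(m : ℤ)) _ ih
      rw [PsiM_neg] at h
      have h' : psiMneg m (Finsupp.single (∅, B) 1) =
          sgn B m • (Finsupp.single (∅, insert m B) 1 : FockF) := by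
        simp only [psiMneg, Finsupp.lsum_single, LinearMap.toSpanSingleton_apply, one_smul,
          if_neg hm, Finset.card_empty, pow_zero, one_mul]
      rw [h'] at h
      exact (U.smul_mem_iff (sgn_ne_zero _ _)).1 h
  have hABU : ∀ A B : Finset ℕ, 0 ∉ A → (Finsupp.single (A, B) 1 : FockF) ∈ U := by
    intro A B
    induction A using Finset.induction_on with
    | empty => exact fun _ => hBU B
    | insert m A hm ih =>
      intro h0A
      rw [Finset.mem_insert, not_or] at h0A
      have h := hP (-(m : ℤ)) (by omega) _ (ih h0A.2)
      rw [PsiP_neg] at h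
      have h' : psiPneg m (Finsupp.single (A, B) 1) =
          sgn A m • (Finsupp.single (insert m A, B) 1 : FockF) := by
        simp [psiPneg, hm]
      rw [h'] at h
      exact (U.smul_mem_iff (sgn_ne_zero _ _)).1 h
  intro v hv
  rw [← Finsupp.sum_single v]
  refine U.sum_mem fun x hx => ?_
  have h1 := hABU x.1 x.2 (hker v hv x hx)
  have h2 : (Finsupp.single x (v x) : FockF) = v x • Finsupp.single (x.1, x.2) 1 := by simp
  rw [h2]
  exact U.smul_mem _ h1
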